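/- arXiv:0911.1900 — 2 statements merged into one kernel-verified Lean document; each statement's English description precedes it below -/
import Mathlib

section
/- Let G=(V,A) be a finite loopless digraph, r ∈ V, T an out-tree of G rooted at r, and v ∈ V(T) a vertex with out-degree 0 in T whose out-neighborhood in G is N⁺(v) = {x₁,x₂} with x₁ ≠ x₂. Suppose there exists a vertex u ≠ v with out-neighborhood N⁺(u) = {x₁,x₂} in G. Let T' be a spanning out-tree of G rooted at r with T' ⪰ T in which v is a leaf, chosen so that |leaves(T')| is maximum among all such trees, and let T* be a spanning out-tree of G rooted at r with T* ⪰ T in which v is internal and both x₁ and x₂ are leaves. Then |leaves(T')| ≥ |leaves(T*)|. -/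
variable {V : Type*} [DecidableEq V] [Fintype V]

/-- The vertex set of an arc set `T` together with the root `r`. -/
def dverts (r : V) (T : Finset (V × V)) : Finset V :=
  insert r (T.image Prod.fst ∪ T.image Prod.snd)

/-- In-degree of `v` in the arc set `T`. -/
def dInDeg (T : Finset (V × V)) (v : V) : ℕ :=
  (T.filter fun a => a.2 = v).card

/-- Out-degree of `v` in the arc set `T`. -/
def dOutDeg (T : Finset (V × V)) (v : V) : ℕ :=
  (T.filter fun a => a.1 = v).card

/-- Reachability by a directed path using only arcs of `T`. -/
def DReach (T : Finset (V × V)) (x y : V) : Prop :=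
  Relation.ReflTransGen (fun a b => (a, b) ∈ T) x y

/-- A loopless arc set. -/
def DLoopless (A : Finset (V × V)) : Prop := ∀ a ∈ A, a.1 ≠ a.2

/-- `T` is an out-tree of the digraph with arc set `A`, rooted at `r`. -/
def IsOutTree (A : Finset (V × V)) (r : V) (T : Finset (V × V)) : Prop :=
  T ⊆ A ∧ dInDeg T r = 0 ∧ (∀ v ∈ dverts r T, v ≠ r → dInDeg T v = 1) ∧
    ∀ v ∈ dverts r T, DReach T r v

/-- `T` is a spanning out-tree of the digraph with arc set `A`, rooted at `r`. -/
def IsSpanningOutTree (A : Finset (V × V)) (r : V) (T : Finset (V × V)) : Prop :=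
  IsOutTree A r T ∧ dverts r T = Finset.univ

/-- The leaves of an out-tree: vertices of out-degree 0. -/
def dleaves (r : V) (T : Finset (V × V)) : Finset V :=
  (dverts r T).filter fun v => dOutDeg T v = 0

/-
Move the children of `v` in `Tstar` below `u`. As `u` is not a descendant of `v`, the result is
again an out-tree on the same vertices. In it `v` has become a leaf, and at most `u` has stopped
being one, so the number of leaves has not dropped.
-/

section Redirect

omit [Fintype V]

variable {A T S : Finset (V × V)} {r u v w x y : V}

theorem dOutDeg_eq_zero_iff : dOutDeg T v = 0 ↔ ∀ y, (v, y) ∉ T := by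
  simp only [dOutDeg, Finset.card_eq_zero, Finset.filter_eq_empty_iff, Prod.forall]
  exact ⟨fun h y hy => h v y hy rfl, fun h a b hab hav => h b (hav ▸ hab)⟩

theorem mem_dverts :
    v ∈ dverts r T ↔ v = r ∨ (∃ y, (v, y) ∈ T) ∨ ∃ x, (x, v) ∈ T := by
  simp [dverts]

theorem mem_dverts_of_dOutDeg_ne_zero (hv : dOutDeg T v ≠ 0) : v ∈ dverts r T := by
  have htail : ∃ y, (v, y) ∈ T := by simpa [dOutDeg_eq_zero_iff] using hv
  exact mem_dverts.2 (Or.inr (Or.inl htail))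

theorem mem_dleaves : v ∈ dleaves r T ↔ v ∈ dverts r T ∧ dOutDeg T v = 0 :=
  Finset.mem_filter

theorem DReach.eq_of_dOutDeg_eq_zero (h : DReach T x y) (hx : dOutDeg T x = 0) : x = y := by
  rcases h.cases_head with rfl | ⟨z, hxz, -⟩
  · rfl
  · exact absurd hxz (dOutDeg_eq_zero_iff.1 hx z)

theorem not_dReach_of_children_leaves (huv : u ≠ v)
    (hchild : ∀ c, (v, c) ∈ T → c ≠ u ∧ dOutDeg T c = 0) : ¬ DReach T v u := by
  intro h
  rcases h.cases_head with rfl | ⟨c, hvc, hcu⟩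
  · exact huv rfl
  · obtain ⟨hne, hleaf⟩ := hchild c hvc
    exact hne (DReach.eq_of_dOutDeg_eq_zero hcu hleaf)

theorem IsOutTree.mem_dverts_iff (hT : IsOutTree A r T) :
    w ∈ dverts r T ↔ w = r ∨ ∃ x, (x, w) ∈ T := by
  refine ⟨fun hw => ?_, fun hw => mem_dverts.2 (hw.imp_right Or.inr)⟩
  rcases (hT.2.2.2 w hw).cases_tail with rfl | ⟨x, -, hxw⟩
  · exact Or.inl rfl
  · exact Or.inr ⟨x, hxw⟩

/-- The arc `a` with its tail moved to `u` if that tail is `v`. -/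
def redirectArc (v u : V) (a : V × V) : V × V :=
  if a.1 = v then (u, a.2) else a

/-- The arc set `T` with every arc leaving `v` replaced by the arc from `u` to the same head.
In an out-tree this makes `u` the parent of all the children of `v`. -/
def redirectOut (T : Finset (V × V)) (v u : V) : Finset (V × V) :=
  T.image (redirectArc v u)

theorem redirectArc_snd (v u : V) (a : V × V) : (redirectArc v u a).2 = a.2 := by
  unfold redirectArc
  split_ifs <;> rfl

theorem mem_redirectOut :
    (x, y) ∈ redirectOut T v u ↔ (x ≠ v ∧ (x, y) ∈ T) ∨ (x = u ∧ (v, y) ∈ T) := by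
  simp only [redirectOut, redirectArc, Finset.mem_image, Prod.exists]
  grind

theorem redirectOut_subset (hTA : T ⊆ A) (hu : ∀ y, (v, y) ∈ T → (u, y) ∈ A) :
    redirectOut T v u ⊆ A := by
  rintro ⟨x, y⟩ hxy
  rcases mem_redirectOut.1 hxy with ⟨-, h⟩ | ⟨rfl, h⟩
  · exact hTA h
  · exact hu y h

theorem subset_redirectOut (hST : S ⊆ T) (hv : dOutDeg S v = 0) : S ⊆ redirectOut T v u := by
  rintro ⟨x, y⟩ hxy
  refine mem_redirectOut.2 (Or.inl ⟨?_, hST hxy⟩)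
  rintro rfl
  exact dOutDeg_eq_zero_iff.1 hv y hxy

theorem exists_mem_redirectOut_iff :
    (∃ x, (x, w) ∈ redirectOut T v u) ↔ ∃ x, (x, w) ∈ T := by
  simp only [mem_redirectOut]
  grind

-- The bound excludes the arcs `(v, w)` and `(u, w)` both lying in `T`, which would be merged.
theorem dInDeg_redirectOut (hw : dInDeg T w ≤ 1) :
    dInDeg (redirectOut T v u) w = dInDeg T w := by
  simp only [dInDeg, redirectOut, Finset.filter_image, redirectArc_snd]
  exact Finset.card_image_of_injOn fun a ha b hb _ => Finset.card_le_one.1 hw a ha b hb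

theorem dOutDeg_redirectOut_self (huv : u ≠ v) : dOutDeg (redirectOut T v u) v = 0 := by
  simp [dOutDeg_eq_zero_iff, mem_redirectOut, huv.symm]

theorem dOutDeg_redirectOut_eq_zero (hwu : w ≠ u) (hw : dOutDeg T w = 0) :
    dOutDeg (redirectOut T v u) w = 0 := by
  rw [dOutDeg_eq_zero_iff] at hw ⊢
  simp [mem_redirectOut, hwu, hw]

theorem DReach.redirectOut_of_not_dReach (h : DReach T x w) (hvw : ¬ DReach T v w) :
    DReach (redirectOut T v u) x w := by
  induction h with
  | refl => exact .refl
  | @tail b c _ hbc ih =>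
    have hvb : ¬ DReach T v b := fun hvb => hvw (hvb.tail hbc)
    have hbv : b ≠ v := fun hbv => hvb (hbv ▸ .refl)
    exact (ih hvb).tail (mem_redirectOut.2 (Or.inl ⟨hbv, hbc⟩))

theorem DReach.redirectOut (h : DReach T x w) (hxu : DReach T x u) (hvu : ¬ DReach T v u) :
    DReach (redirectOut T v u) x w := by
  induction h with
  | refl => exact .refl
  | @tail b c _ hbc ih =>
    by_cases hbv : b = v
    · exact (hxu.redirectOut_of_not_dReach hvu).tail
        (mem_redirectOut.2 (Or.inr ⟨rfl, hbv ▸ hbc⟩))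
    · exact ih.tail (mem_redirectOut.2 (Or.inl ⟨hbv, hbc⟩))

theorem IsOutTree.dverts_redirectOut (hT : IsOutTree A r T) (hu : u ∈ dverts r T) :
    dverts r (redirectOut T v u) = dverts r T := by
  ext w
  constructor
  · intro hw
    rcases mem_dverts.1 hw with rfl | ⟨y, hwy⟩ | hhead
    · exact mem_dverts.2 (Or.inl rfl)
    · rcases mem_redirectOut.1 hwy with ⟨-, h⟩ | ⟨rfl, -⟩
      · exact mem_dverts.2 (Or.inr (Or.inl ⟨y, h⟩))
      · exact hu
    · exact hT.mem_dverts_iff.2 (Or.inr (exists_mem_redirectOut_iff.1 hhead))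
  · intro hw
    exact mem_dverts.2
      ((hT.mem_dverts_iff.1 hw).imp_right (Or.inr ∘ exists_mem_redirectOut_iff.2))

theorem IsOutTree.redirectOut (hT : IsOutTree A r T) (hu : u ∈ dverts r T)
    (hvu : ¬ DReach T v u) (hA : ∀ y, (v, y) ∈ T → (u, y) ∈ A) :
    IsOutTree A r (redirectOut T v u) := by
  have hverts := hT.dverts_redirectOut (v := v) hu
  obtain ⟨hTA, hroot, hin, hreach⟩ := hT
  refine ⟨redirectOut_subset hTA hA, ?_, fun w hw hwr => ?_, fun w hw => ?_⟩
  · rw [dInDeg_redirectOut (by omega), hroot]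
  · have hw1 := hin w (hverts ▸ hw) hwr
    rw [dInDeg_redirectOut hw1.le, hw1]
  · exact (hreach w (hverts ▸ hw)).redirectOut (hreach u hu) hvu

theorem card_dleaves_le_card_dleaves_redirectOut (huv : u ≠ v) (hv : dOutDeg T v ≠ 0)
    (hverts : dverts r (redirectOut T v u) = dverts r T) :
    (dleaves r T).card ≤ (dleaves r (redirectOut T v u)).card := by
  have hvleaf : v ∉ (dleaves r T).erase u := fun h =>
    hv (mem_dleaves.1 (Finset.mem_of_mem_erase h)).2
  have hsub : insert v ((dleaves r T).erase u) ⊆ dleaves r (redirectOut T v u) := by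
    refine Finset.insert_subset ?_ fun w hw => ?_
    · exact mem_dleaves.2
        ⟨hverts ▸ mem_dverts_of_dOutDeg_ne_zero hv, dOutDeg_redirectOut_self huv⟩
    · obtain ⟨hwu, hwT⟩ := Finset.mem_erase.1 hw
      obtain ⟨hwverts, hwout⟩ := mem_dleaves.1 hwT
      exact mem_dleaves.2 ⟨hverts ▸ hwverts, dOutDeg_redirectOut_eq_zero hwu hwout⟩
  calc (dleaves r T).card
      ≤ ((dleaves r T).erase u).card + 1 := Nat.sub_le_iff_le_add.1 Finset.pred_card_le_card_erase
    _ = (insert v ((dleaves r T).erase u)).card := (Finset.card_insert_of_notMem hvleaf).symm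
    _ ≤ (dleaves r (redirectOut T v u)).card := Finset.card_le_card hsub

theorem stmt1_general (A T Tstar : Finset (V × V)) (r v u : V) (hvdeg : dOutDeg T v = 0)
    (hTs : IsOutTree A r Tstar) (hTTs : T ⊆ Tstar) (hu : u ∈ dverts r Tstar)
    (hvu : ¬ DReach Tstar v u) (hN : ∀ y, (v, y) ∈ Tstar → (u, y) ∈ A) :
    ∃ S, IsOutTree A r S ∧ dverts r S = dverts r Tstar ∧ T ⊆ S ∧ dOutDeg S v = 0 ∧
      (dleaves r Tstar).card ≤ (dleaves r S).card := by
  by_cases hvint : dOutDeg Tstar v = 0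
  · exact ⟨Tstar, hTs, rfl, hTTs, hvint, le_rfl⟩
  · have huv : u ≠ v := fun huv => hvu (huv ▸ .refl)
    have hverts := hTs.dverts_redirectOut (v := v) hu
    exact ⟨redirectOut Tstar v u, hTs.redirectOut hu hvu hN, hverts,
      subset_redirectOut hTTs hvdeg, dOutDeg_redirectOut_self huv,
      card_dleaves_le_card_dleaves_redirectOut huv hvint hverts⟩

end Redirect

theorem stmt1 (A T T' Tstar : Finset (V × V)) (r v x₁ x₂ u : V)
    (hA : DLoopless A) (hT : IsOutTree A r T) (hv : v ∈ dverts r T)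
    (hvdeg : dOutDeg T v = 0)
    (hNv : ∀ y : V, (v, y) ∈ A ↔ y = x₁ ∨ y = x₂) (hx : x₁ ≠ x₂)
    (huv : u ≠ v) (hNu : ∀ y : V, (u, y) ∈ A ↔ y = x₁ ∨ y = x₂)
    (hT' : IsSpanningOutTree A r T') (hTT' : T ⊆ T')
    (hvleaf : dOutDeg T' v = 0)
    (hopt : ∀ S : Finset (V × V), IsSpanningOutTree A r S → T ⊆ S →
      dOutDeg S v = 0 → (dleaves r S).card ≤ (dleaves r T').card)
    (hTs : IsSpanningOutTree A r Tstar) (hTTs : T ⊆ Tstar)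
    (hvint : 1 ≤ dOutDeg Tstar v) (hx1 : dOutDeg Tstar x₁ = 0)
    (hx2 : dOutDeg Tstar x₂ = 0) :
    (dleaves r Tstar).card ≤ (dleaves r T').card := by
  have hvTs : ∀ y, (v, y) ∈ Tstar → y = x₁ ∨ y = x₂ := fun y hy => (hNv y).1 (hTs.1.1 hy)
  have hN : ∀ y, (v, y) ∈ Tstar → (u, y) ∈ A := fun y hy => (hNu y).2 (hvTs y hy)
  have hvu : ¬ DReach Tstar v u := by
    refine not_dReach_of_children_leaves huv fun c hc => ⟨(hA _ (hN c hc)).symm, ?_⟩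
    rcases hvTs c hc with rfl | rfl
    exacts [hx1, hx2]
  obtain ⟨S, hS, hverts, hTS, hSv, hle⟩ :=
    stmt1_general A T Tstar r v u hvdeg hTs.1 hTTs (hTs.2 ▸ Finset.mem_univ u) hvu hN
  exact hle.trans (hopt S ⟨hS, hverts.trans hTs.2⟩ hTS hSv)
end

section
/- (Soundness of reduction rule R5.) Let G=(V,A) be a finite loopless digraph, r ∈ V, and u ∈ V. Suppose that in the digraph (V, A \ N⁺_A(u)) obtained from G by deleting all arcs with tail u, some vertex of V is not reachable from r by a directed path. Then every spanning out-tree T' of G rooted at r contains at least one arc with tail u; that is, u is internal in every spanning out-tree of G rooted at r. -/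
variable {V : Type*} [DecidableEq V] [Fintype V]

section Reachability

variable {α : Type*} {S T : Finset (α × α)} {x y : α}

lemma DReach.mono (hST : S ⊆ T) (h : DReach S x y) : DReach T x y :=
  Relation.ReflTransGen.mono (fun _ _ hab ↦ hST hab) _ _ h

variable [DecidableEq α] {A : Finset (α × α)} {u : α}

lemma dOutDeg_eq_zero_iff_s8 : dOutDeg T u = 0 ↔ ∀ a ∈ T, a.1 ≠ u := by
  rw [dOutDeg, Finset.card_eq_zero, Finset.filter_eq_empty_iff]

lemma subset_filter_fst_ne_iff :
    (T ⊆ A.filter fun a => a.1 ≠ u) ↔ T ⊆ A ∧ dOutDeg T u = 0 := by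
  simp only [Finset.subset_iff, Finset.mem_filter, imp_and, forall_and, dOutDeg_eq_zero_iff_s8]

theorem stmt8_general (hTA : T ⊆ A) (hT : DReach T x y)
    (hcut : ¬ DReach (A.filter fun a => a.1 ≠ u) x y) : 1 ≤ dOutDeg T u := by
  refine Nat.one_le_iff_ne_zero.mpr fun hu ↦ ?_
  exact hcut (hT.mono (subset_filter_fst_ne_iff.mpr ⟨hTA, hu⟩))

end Reachability

section SpanningOutTree

variable {A T : Finset (V × V)} {r : V}

lemma IsSpanningOutTree.subset (hT : IsSpanningOutTree A r T) : T ⊆ A :=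
  hT.1.1

lemma IsSpanningOutTree.dReach (hT : IsSpanningOutTree A r T) (v : V) : DReach T r v :=
  hT.1.2.2.2 v (hT.2 ▸ Finset.mem_univ v)

end SpanningOutTree

theorem stmt8 (A : Finset (V × V)) (r u : V)
    (hA : DLoopless A)
    (hcut : ∃ w : V, ¬ DReach (A.filter fun a => a.1 ≠ u) r w) :
    ∀ T' : Finset (V × V), IsSpanningOutTree A r T' → 1 ≤ dOutDeg T' u := by
  obtain ⟨w, hw⟩ := hcut
  exact fun T' hT' ↦ stmt8_general hT'.subset (hT'.dReach w) hw
end
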